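/- Let a = (4/π)·𝒦(1/√2)² and c = a·(4(a−1)² − a²)/16. The function f(K) = (K−1)⁻³·[λ(K) − 1 − a(K−1) − (1/2)a(a−1)(K−1)²] is strictly increasing on (1, ∞); moreover f(K) → c as K → 1⁺ and f(K) → ∞ as K → ∞, so f maps (1, ∞) onto (c, ∞). -/

import Mathlib

open Set Filter

/-- Complete elliptic integral of the first kind. -/
noncomputable def ellK (r : ℝ) : ℝ :=
  ∫ θ in (0:ℝ)..(Real.pi / 2), (1 - r ^ 2 * Real.sin θ ^ 2) ^ (-(1/2) : ℝ)

/-- The Grötzsch modulus μ(r) = (π/2)·𝒦'(r)/𝒦(r). -/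
noncomputable def mu (r : ℝ) : ℝ :=
  Real.pi / 2 * ellK (Real.sqrt (1 - r ^ 2)) / ellK r

/-!
Write `m = r²` and let `κ(m) = 𝒦(r) / 𝒦(r')`, so that `λ(t) = m / (1 - m)` along the inverse `m(t)`
of `κ`. Legendre's relation collapses `κ'` to `π / (4 m (1 - m) 𝒦(r')²)`, hence with
`P = (4/π) 𝒦(r')²` and `S = (1 + m) P - (4/π) 𝒦(r') ℰ(r')` one gets the polynomial system
`m' = m (1 - m) P`, `λ' = λ P`, `P' = P (S - P)`, `2 S' = S² - (1 - m + m²) P²`.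
So every derivative of `λ` is `λ P` times a polynomial in `m, P, S`, and Legendre's relation at
`t = 1`, where `m = 1/2`, evaluates them there through `P = a`, `S = a - 1`. For `t ≥ 1` the bound
`S ≥ (1 + m) P / 2` makes the fourth derivative positive. Thus `λ'''` increases, and applying the
monotone form of l'Hôpital's rule three times shows that `f`, which is the third order Taylor
remainder of `λ` at `1` divided by `(t - 1)³`, increases from `λ'''(1) / 6 = c`. It is unbounded
because `P ≥ π` forces `λ` to grow exponentially.
-/

section TaylorQuotient

open Topology Finset

/-- **Monotone form of l'Hôpital's rule** (Anderson–Vamanamurthy–Vuorinen). -/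
theorem strictMonoOn_div_of_strictMonoOn_deriv_div {f f' g g' : ℝ → ℝ} {a : ℝ}
    (hfc : ContinuousOn f (Ici a)) (hgc : ContinuousOn g (Ici a)) (hfa : f a = 0) (hga : g a = 0)
    (hf : ∀ x ∈ Ioi a, HasDerivAt f (f' x) x) (hg : ∀ x ∈ Ioi a, HasDerivAt g (g' x) x)
    (hg' : ∀ x ∈ Ioi a, 0 < g' x) (hmono : StrictMonoOn (fun x ↦ f' x / g' x) (Ioi a)) :
    StrictMonoOn (fun x ↦ f x / g x) (Ioi a) := by
  have hg_mono : StrictMonoOn g (Ici a) := by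
    refine strictMonoOn_of_hasDerivWithinAt_pos (f' := g') (convex_Ici a) hgc ?_ ?_ <;>
      rw [interior_Ici]
    exacts [fun x hx ↦ (hg x hx).hasDerivWithinAt, hg']
  have cauchy : ∀ {x y}, a ≤ x → x < y →
      ∃ c ∈ Ioo x y, (f y - f x) / (g y - g x) = f' c / g' c := by
    intro x y hax hxy
    obtain ⟨c, hc, h⟩ := exists_ratio_hasDerivAt_eq_ratio_slope f f' hxy
      (hfc.mono fun z hz ↦ hax.trans hz.1) (fun z hz ↦ hf z (hax.trans_lt hz.1)) g g'
      (hgc.mono fun z hz ↦ hax.trans hz.1) (fun z hz ↦ hg z (hax.trans_lt hz.1))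
    have hgxy := hg_mono hax (hax.trans hxy.le) hxy
    refine ⟨c, hc, ?_⟩
    rw [div_eq_div_iff (sub_pos.2 hgxy).ne' (hg' c (hax.trans_lt hc.1)).ne', ← h, mul_comm]
  intro x hx y hy hxy
  have hx' : x ∈ Ici a := Ioi_subset_Ici_self hx
  have hgx : 0 < g x := hga ▸ hg_mono self_mem_Ici hx' hx
  have hgxy : 0 < g y - g x := sub_pos.2 (hg_mono hx' (Ioi_subset_Ici_self hy) hxy)
  obtain ⟨c, hc, hfg_x⟩ := cauchy le_rfl hx
  obtain ⟨d, hd, hfg_xy⟩ := cauchy hx' hxy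
  rw [hfa, hga, sub_zero, sub_zero] at hfg_x
  have hslope : f x / g x < (f y - f x) / (g y - g x) := by
    rw [hfg_x, hfg_xy]
    exact hmono hc.1 (hx.trans hd.1) (hc.2.trans hd.1)
  rw [div_lt_div_iff₀ hgx hgxy] at hslope
  change f x / g x < f y / g y
  rw [div_lt_div_iff₀ hgx (by linarith)]
  linarith

/-- The remainder at `x` of the Taylor expansion of `f 0` about `a` to order less than `n`; the
derivatives of `f 0` are supplied as the sequence `f`. -/
noncomputable def taylorRemainder (f : ℕ → ℝ → ℝ) (a : ℝ) (n : ℕ) (x : ℝ) : ℝ :=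
  f 0 x - ∑ k ∈ range n, f k a / k.factorial * (x - a) ^ k

/-- The Taylor remainder of order `n` normalised by `(x - a) ^ n`. -/
noncomputable def taylorQuotient (f : ℕ → ℝ → ℝ) (a : ℝ) (n : ℕ) (x : ℝ) : ℝ :=
  taylorRemainder f a n x / (x - a) ^ n

variable {f : ℕ → ℝ → ℝ} {a x : ℝ} {n : ℕ}

theorem taylorQuotient_zero : taylorQuotient f a 0 = f 0 := by
  ext x
  simp [taylorQuotient, taylorRemainder]

theorem taylorRemainder_succ_self : taylorRemainder f a (n + 1) a = 0 := by
  simp [taylorRemainder, sum_range_succ']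

theorem hasDerivAt_taylorRemainder_succ (hf : HasDerivAt (f 0) (f 1 x) x) :
    HasDerivAt (taylorRemainder f a (n + 1)) (taylorRemainder (fun k ↦ f (k + 1)) a n x) x := by
  have hterm (k : ℕ) : HasDerivAt (fun y ↦ f (k + 1) a / (k + 1).factorial * (y - a) ^ (k + 1))
      (f (k + 1) a / k.factorial * (x - a) ^ k) x := by
    refine ((((hasDerivAt_id x).sub_const a).fun_pow (k + 1)).const_mul _).congr_deriv ?_
    rw [Nat.factorial_succ]
    simp only [id, add_tsub_cancel_right]
    push_cast
    field_simp
  have hsum := HasDerivAt.fun_sum fun k (_ : k ∈ range n) ↦ hterm k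
  refine ((hf.sub hsum).sub_const (f 0 a)).congr_of_eventuallyEq (.of_forall fun y ↦ ?_)
  simp [taylorRemainder, sum_range_succ', sub_sub]

theorem hasDerivAt_sub_pow_succ :
    HasDerivAt (fun y ↦ (y - a) ^ (n + 1)) ((n + 1) * (x - a) ^ n) x := by
  simpa using ((hasDerivAt_id x).sub_const a).fun_pow (n + 1)

theorem strictMonoOn_taylorQuotient
    (hf : ∀ k < n, ∀ x ∈ Ici a, HasDerivAt (f k) (f (k + 1) x) x)
    (hmono : StrictMonoOn (f n) (Ioi a)) : StrictMonoOn (taylorQuotient f a n) (Ioi a) := by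
  induction n generalizing f with
  | zero => simpa only [taylorQuotient_zero] using hmono
  | succ n ih =>
    have hrem : ∀ x ∈ Ici a, HasDerivAt (taylorRemainder f a (n + 1))
        (taylorRemainder (fun k ↦ f (k + 1)) a n x) x := fun x hx ↦
      hasDerivAt_taylorRemainder_succ (hf 0 n.succ_pos x hx)
    refine strictMonoOn_div_of_strictMonoOn_deriv_div
      (fun x hx ↦ (hrem x hx).continuousAt.continuousWithinAt) (by fun_prop)
      taylorRemainder_succ_self (by simp) (fun x hx ↦ hrem x (Ioi_subset_Ici_self hx))
      (fun x _ ↦ hasDerivAt_sub_pow_succ) (fun x hx ↦ ?_) ?_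
    · have : 0 < x - a := sub_pos.2 hx
      positivity
    · have ih' := ih (fun k hk ↦ hf (k + 1) (Nat.succ_lt_succ hk)) hmono
      intro x hx y hy hxy
      have hlt := div_lt_div_of_pos_right (ih' hx hy hxy) n.cast_add_one_pos
      simpa only [taylorQuotient, div_div, mul_comm] using hlt

theorem tendsto_taylorQuotient_nhdsGT
    (hf : ∀ k < n, ∀ x ∈ Ici a, HasDerivAt (f k) (f (k + 1) x) x)
    (hcont : ContinuousWithinAt (f n) (Ioi a) a) :
    Tendsto (taylorQuotient f a n) (𝓝[>] a) (𝓝 (f n a / n.factorial)) := by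
  induction n generalizing f with
  | zero => simpa [taylorQuotient_zero] using hcont.tendsto
  | succ n ih =>
    have hrem : ∀ x ∈ Ici a, HasDerivAt (taylorRemainder f a (n + 1))
        (taylorRemainder (fun k ↦ f (k + 1)) a n x) x := fun x hx ↦
      hasDerivAt_taylorRemainder_succ (hf 0 n.succ_pos x hx)
    have hpow : HasDerivAt (fun y ↦ (y - a) ^ (n + 1)) ((n + 1) * (a - a) ^ n) a :=
      hasDerivAt_sub_pow_succ
    refine HasDerivAt.lhopital_zero_nhdsGT (f' := taylorRemainder (fun k ↦ f (k + 1)) a n)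
      ?_ (.of_forall fun x ↦ hasDerivAt_sub_pow_succ) ?_ ?_ ?_ ?_
    · filter_upwards [self_mem_nhdsWithin] with x hx using hrem x (Ioi_subset_Ici_self hx)
    · filter_upwards [self_mem_nhdsWithin] with x hx
      have : 0 < x - a := sub_pos.2 hx
      positivity
    · simpa only [taylorRemainder_succ_self] using
        (hrem a self_mem_Ici).continuousAt.tendsto.mono_left nhdsWithin_le_nhds
    · simpa using hpow.continuousAt.tendsto.mono_left nhdsWithin_le_nhds
    · have ih' := (ih (fun k hk ↦ hf (k + 1) (Nat.succ_lt_succ hk)) hcont).div_const (n + 1 : ℝ)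
      convert ih' using 2 with x
      · simp only [taylorQuotient, div_div, mul_comm]
      · push_cast [Nat.factorial_succ]
        rw [div_div, mul_comm]

theorem continuousOn_taylorQuotient (hf : ContinuousOn (f 0) (Ioi a)) :
    ContinuousOn (taylorQuotient f a n) (Ioi a) :=
  (hf.sub (by fun_prop)).div (by fun_prop) fun _ hx ↦ pow_ne_zero _ (sub_pos.2 hx).ne'

theorem tendsto_taylorQuotient_atTop (hf : Tendsto (fun x ↦ f 0 x / (x - a) ^ n) atTop atTop) :
    Tendsto (taylorQuotient f a n) atTop atTop := by
  have hsub : Tendsto (fun x ↦ x - a) atTop atTop := tendsto_atTop_add_const_right _ _ tendsto_id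
  have hpoly : Tendsto (fun x ↦ ∑ k ∈ range n,
      f k a / k.factorial * ((x - a) ^ k / (x - a) ^ n)) atTop (𝓝 0) := by
    rw [← sum_const_zero (s := range n)]
    refine tendsto_finsetSum _ fun k hk ↦ ?_
    simpa using ((tendsto_pow_div_pow_atTop_zero (mem_range.1 hk)).comp hsub).const_mul
      (f k a / k.factorial)
  refine (hf.atTop_add hpoly.neg).congr fun x ↦ ?_
  rw [← sub_eq_add_neg]
  simp only [taylorQuotient, taylorRemainder, sub_div, sum_div, mul_div_assoc]

end TaylorQuotient

theorem image_Ioi_eq_Ioi_of_strictMonoOn {f : ℝ → ℝ} {a c : ℝ} (hmono : StrictMonoOn f (Ioi a))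
    (hcont : ContinuousOn f (Ioi a)) (hleft : Tendsto f (nhdsWithin a (Ioi a)) (nhds c))
    (htop : Tendsto f atTop atTop) : f '' Ioi a = Ioi c := by
  refine (image_subset_iff.2 fun x hx ↦ ?_).antisymm
    (isPreconnected_Ioi.intermediate_value_Ioi (l₁ := nhdsWithin a (Ioi a)) inf_le_right
      (le_principal_iff.2 (Ioi_mem_atTop a)) hcont hleft htop)
  obtain ⟨y, hay, hyx⟩ := exists_between (mem_Ioi.1 hx)
  have hcy : c ≤ f y := le_of_tendsto hleft <| by
    filter_upwards [Ioo_mem_nhdsGT hay] with z hz using (hmono hz.1 hay hz.2).le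
  exact hcy.trans_lt (hmono hay hx hyx)

section EllipticIntegral

open Real Topology intervalIntegral

/-- The integral `∫₀^{π/2} (1 - m sin² θ) ^ s dθ` as a function of the parameter `m = r²`; it
interpolates between the complete elliptic integrals of the first (`s = -1/2`) and second
(`s = 1/2`) kind. -/
noncomputable def ellipticIntegral (s m : ℝ) : ℝ :=
  ∫ θ in (0 : ℝ)..π / 2, (1 - m * sin θ ^ 2) ^ s

/-- The complete elliptic integral of the first kind as a function of the parameter `m = r²`. -/
noncomputable def ellipticK (m : ℝ) : ℝ :=
  ellipticIntegral (-(1 / 2)) m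

/-- The complete elliptic integral of the second kind as a function of the parameter `m = r²`. -/
noncomputable def ellipticE (m : ℝ) : ℝ :=
  ellipticIntegral (1 / 2) m

variable {s m : ℝ}

theorem one_sub_mul_sin_sq_pos (hm : m < 1) (θ : ℝ) : 0 < 1 - m * sin θ ^ 2 := by
  have hle : m * sin θ ^ 2 ≤ max m 0 * 1 :=
    mul_le_mul (le_max_left m 0) (sin_sq_le_one θ) (sq_nonneg _) (le_max_right m 0)
  linarith [max_lt hm one_pos]

theorem continuous_one_sub_mul_sin_sq_rpow (s : ℝ) (hm : m < 1) :
    Continuous fun θ ↦ (1 - m * sin θ ^ 2) ^ s :=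
  Continuous.rpow_const (by fun_prop) fun θ ↦ .inl (one_sub_mul_sin_sq_pos hm θ).ne'

theorem intervalIntegrable_one_sub_mul_sin_sq_rpow (s : ℝ) (hm : m < 1) (a b : ℝ) :
    IntervalIntegrable (fun θ ↦ (1 - m * sin θ ^ 2) ^ s) MeasureTheory.volume a b :=
  (continuous_one_sub_mul_sin_sq_rpow s hm).intervalIntegrable a b

theorem one_sub_mul_sin_sq_rpow_mul_self (s : ℝ) (hm : m < 1) (θ : ℝ) :
    (1 - m * sin θ ^ 2) ^ (s - 1) * (1 - m * sin θ ^ 2) = (1 - m * sin θ ^ 2) ^ s := by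
  rw [rpow_sub_one (one_sub_mul_sin_sq_pos hm θ).ne',
    div_mul_cancel₀ _ (one_sub_mul_sin_sq_pos hm θ).ne']

theorem hasDerivAt_ellipticIntegral_integral (s : ℝ) (hm : m < 1) :
    HasDerivAt (ellipticIntegral s)
      (∫ θ in (0 : ℝ)..π / 2, -(s * (sin θ ^ 2 * (1 - m * sin θ ^ 2) ^ (s - 1)))) m := by
  obtain ⟨b, hmb, hb⟩ := exists_between hm
  have hcont : ContinuousOn
      (fun p : ℝ × ℝ ↦ -(s * (sin p.2 ^ 2 * (1 - p.1 * sin p.2 ^ 2) ^ (s - 1))))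
      (Icc (m - 1) b ×ˢ Icc 0 (π / 2)) := by
    refine (continuousOn_const.mul (.mul (by fun_prop) (.rpow_const (by fun_prop) ?_))).neg
    exact fun p hp ↦ .inl (one_sub_mul_sin_sq_pos (hp.1.2.trans_lt hb) p.2).ne'
  obtain ⟨C, hC⟩ := (isCompact_Icc.prod isCompact_Icc).exists_bound_of_continuousOn hcont
  have hnhds : Icc (m - 1) b ∈ 𝓝 m := Icc_mem_nhds (by linarith) hmb
  refine (hasDerivAt_integral_of_dominated_loc_of_deriv_le
    (F := fun x θ ↦ (1 - x * sin θ ^ 2) ^ s)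
    (F' := fun x θ ↦ -(s * (sin θ ^ 2 * (1 - x * sin θ ^ 2) ^ (s - 1))))
    (bound := fun _ ↦ C) hnhds ?_
    (intervalIntegrable_one_sub_mul_sin_sq_rpow s hm 0 (π / 2)) ?_ ?_
    intervalIntegrable_const ?_).2
  · filter_upwards [Iio_mem_nhds hm] with x hx
    exact (continuous_one_sub_mul_sin_sq_rpow s hx).aestronglyMeasurable
  · exact (continuous_const.mul (.mul (by fun_prop)
      (continuous_one_sub_mul_sin_sq_rpow (s - 1) hm))).neg.aestronglyMeasurable
  · refine .of_forall fun θ hθ x hx ↦ hC (x, θ) ⟨hx, ?_⟩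
    rw [uIoc_of_le (by positivity)] at hθ
    exact Ioc_subset_Icc_self hθ
  · refine .of_forall fun θ _ x hx ↦ ?_
    have hlin : HasDerivAt (fun y ↦ 1 - y * sin θ ^ 2) (-sin θ ^ 2) x := by
      simpa using ((hasDerivAt_id x).mul_const (sin θ ^ 2)).const_sub 1
    refine (hlin.rpow_const (p := s)
      (.inl (one_sub_mul_sin_sq_pos (hx.2.trans_lt hb) θ).ne')).congr_deriv (by ring)

theorem hasDerivAt_ellipticIntegral (s : ℝ) (hm : m < 1) (hm0 : m ≠ 0) :
    HasDerivAt (ellipticIntegral s)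
      (s / m * (ellipticIntegral s m - ellipticIntegral (s - 1) m)) m := by
  refine (hasDerivAt_ellipticIntegral_integral s hm).congr_deriv ?_
  rw [ellipticIntegral, ellipticIntegral,
    ← integral_sub (intervalIntegrable_one_sub_mul_sin_sq_rpow s hm _ _)
      (intervalIntegrable_one_sub_mul_sin_sq_rpow (s - 1) hm _ _),
    ← integral_const_mul]
  refine integral_congr fun θ _ ↦ ?_
  simp only [← one_sub_mul_sin_sq_rpow_mul_self s hm θ]
  field_simp
  ring

theorem continuousAt_ellipticIntegral (s : ℝ) (hm : m < 1) :
    ContinuousAt (ellipticIntegral s) m :=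
  (hasDerivAt_ellipticIntegral_integral s hm).continuousAt

theorem continuous_ellipticE : Continuous ellipticE :=
  intervalIntegral.continuous_parametric_intervalIntegral_of_continuous'
    (by fun_prop (disch := norm_num)) 0 (π / 2)

/-- Integrate the derivative of `sin θ cos θ (1 - m sin² θ) ^ s`, which vanishes at both ends. -/
theorem ellipticIntegral_recurrence (s : ℝ) (hm : m < 1) :
    (2 + 2 * s) * ellipticIntegral (s + 1) m + (1 + 2 * s) * (m - 2) * ellipticIntegral s m
      + 2 * s * (1 - m) * ellipticIntegral (s - 1) m = 0 := by
  have hderiv (θ : ℝ) : HasDerivAt (fun x ↦ m * (sin x * cos x * (1 - m * sin x ^ 2) ^ s))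
      ((2 + 2 * s) * (1 - m * sin θ ^ 2) ^ (s + 1)
        + (1 + 2 * s) * (m - 2) * (1 - m * sin θ ^ 2) ^ s
        + 2 * s * (1 - m) * (1 - m * sin θ ^ 2) ^ (s - 1)) θ := by
    have hpos := one_sub_mul_sin_sq_pos hm θ
    have hpow : HasDerivAt (fun x ↦ (1 - m * sin x ^ 2) ^ s) _ θ :=
      ((((hasDerivAt_sin θ).fun_pow 2).const_mul m).const_sub 1).rpow_const (.inl hpos.ne')
    refine ((((hasDerivAt_sin θ).mul (hasDerivAt_cos θ)).mul hpow).const_mul m).congr_deriv ?_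
    rw [rpow_add_one hpos.ne', ← one_sub_mul_sin_sq_rpow_mul_self s hm θ]
    simp only [Pi.mul_apply]
    generalize (1 - m * sin θ ^ 2) ^ (s - 1) = D
    have hcos : cos θ ^ 2 = 1 - sin θ ^ 2 := cos_sq' θ
    push_cast
    linear_combination (m * D * (1 - m * sin θ ^ 2) - 2 * s * m ^ 2 * sin θ ^ 2 * D) * hcos
  have hint (p : ℝ) := intervalIntegrable_one_sub_mul_sin_sq_rpow p hm 0 (π / 2)
  have hftc := integral_eq_sub_of_hasDerivAt (fun θ _ ↦ hderiv θ)
    ((((hint _).const_mul _).add ((hint _).const_mul _)).add ((hint _).const_mul _))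
  rw [integral_add (((hint _).const_mul _).add ((hint _).const_mul _)) ((hint _).const_mul _),
    integral_add ((hint _).const_mul _) ((hint _).const_mul _)] at hftc
  simpa [ellipticIntegral] using hftc

theorem ellipticK_pos (hm : m < 1) : 0 < ellipticK m :=
  intervalIntegral_pos_of_pos_on (intervalIntegrable_one_sub_mul_sin_sq_rpow _ hm _ _)
    (fun θ _ ↦ rpow_pos_of_pos (one_sub_mul_sin_sq_pos hm θ) _) (by positivity)

theorem hasDerivAt_ellipticK (hm : m < 1) (hm0 : m ≠ 0) :
    HasDerivAt ellipticK ((ellipticE m - (1 - m) * ellipticK m) / (2 * m * (1 - m))) m := by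
  refine (hasDerivAt_ellipticIntegral (-(1 / 2)) hm hm0).congr_deriv ?_
  have hrec := ellipticIntegral_recurrence (-(1 / 2)) hm
  rw [show (-(1 / 2) + 1 : ℝ) = 1 / 2 by norm_num] at hrec
  have h1m : 1 - m ≠ 0 := (sub_pos.2 hm).ne'
  rw [ellipticE, ellipticK]
  generalize ellipticIntegral (-(1 / 2) - 1) m = M at hrec ⊢
  field_simp
  linear_combination -hrec

theorem hasDerivAt_ellipticE (hm : m < 1) (hm0 : m ≠ 0) :
    HasDerivAt ellipticE ((ellipticE m - ellipticK m) / (2 * m)) m := by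
  refine (hasDerivAt_ellipticIntegral (1 / 2) hm hm0).congr_deriv ?_
  rw [ellipticE, ellipticK, show (1 / 2 - 1 : ℝ) = -(1 / 2) by norm_num]
  field_simp

theorem ellipticK_zero : ellipticK 0 = π / 2 := by
  simp [ellipticK, ellipticIntegral]

theorem ellipticE_one : ellipticE 1 = 1 := by
  have hcos : EqOn (fun θ ↦ (1 - 1 * sin θ ^ 2) ^ (1 / 2 : ℝ)) cos (uIcc 0 (π / 2)) := by
    intro θ hθ
    rw [uIcc_of_le (by positivity)] at hθ
    have hcos_nonneg := cos_nonneg_of_mem_Icc ⟨by linarith [hθ.1, pi_pos], hθ.2⟩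
    simp only [one_mul, ← cos_sq', ← sqrt_eq_rpow, sqrt_sq hcos_nonneg]
  rw [ellipticE, ellipticIntegral, integral_congr hcos]
  simp

theorem pi_div_two_le_ellipticK (hm0 : 0 ≤ m) (hm : m < 1) : π / 2 ≤ ellipticK m := by
  rw [← ellipticK_zero]
  refine integral_mono_on (by positivity)
    (intervalIntegrable_one_sub_mul_sin_sq_rpow _ one_pos _ _)
    (intervalIntegrable_one_sub_mul_sin_sq_rpow _ hm _ _) fun θ _ ↦ ?_
  refine rpow_le_rpow_of_nonpos (one_sub_mul_sin_sq_pos hm θ) ?_ (by norm_num)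
  nlinarith [mul_nonneg hm0 (sq_nonneg (sin θ))]

theorem ellipticK_le (hm0 : 0 ≤ m) (hm : m < 1) : ellipticK m ≤ π / 2 / √(1 - m) := by
  have hbound : ellipticK m ≤ ∫ _ in (0 : ℝ)..π / 2, (1 - m) ^ (-(1 / 2) : ℝ) := by
    refine integral_mono_on (by positivity)
      (intervalIntegrable_one_sub_mul_sin_sq_rpow _ hm _ _) intervalIntegrable_const fun θ _ ↦ ?_
    refine rpow_le_rpow_of_nonpos (sub_pos.2 hm) ?_ (by norm_num)
    nlinarith [sin_sq_le_one θ]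
  rwa [integral_const, sub_zero, smul_eq_mul, rpow_neg (sub_pos.2 hm).le, ← sqrt_eq_rpow,
    ← div_eq_mul_inv] at hbound

theorem one_sub_mul_ellipticK_le_ellipticE (hm0 : 0 ≤ m) (hm : m < 1) :
    (1 - m) * ellipticK m ≤ ellipticE m := by
  rw [ellipticK, ellipticIntegral, ← integral_const_mul]
  refine integral_mono_on (by positivity)
    ((intervalIntegrable_one_sub_mul_sin_sq_rpow _ hm _ _).const_mul _)
    (intervalIntegrable_one_sub_mul_sin_sq_rpow _ hm _ _) fun θ _ ↦ ?_
  rw [← one_sub_mul_sin_sq_rpow_mul_self (1 / 2) hm θ, mul_comm,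
    show (1 / 2 - 1 : ℝ) = -(1 / 2) by norm_num]
  have := rpow_nonneg (one_sub_mul_sin_sq_pos hm θ).le (-(1 / 2))
  gcongr
  nlinarith [sin_sq_le_one θ]

theorem integral_one_sub_mul_sin_sq (m : ℝ) :
    ∫ θ in (0 : ℝ)..π / 2, (1 - m * sin θ ^ 2) = π / 2 * (1 - m / 2) := by
  rw [integral_sub intervalIntegrable_const (Continuous.intervalIntegrable (by fun_prop) _ _)]
  simp [integral_sin_sq]
  ring

/-- Chebyshev's inequality for the oppositely ordered functions `D` and `D ^ (-1/2)`, where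
`D = 1 - m sin² θ` has mean `1 - m / 2`. -/
theorem ellipticE_le_mul_ellipticK (hm : m < 1) : ellipticE m ≤ (1 - m / 2) * ellipticK m := by
  have hc : (0 : ℝ) < 1 - m / 2 := by linarith
  have hint (p : ℝ) := intervalIntegrable_one_sub_mul_sin_sq_rpow p hm 0 (π / 2)
  have hpointwise (θ : ℝ) : (1 - m * sin θ ^ 2) ^ (1 / 2 : ℝ)
      - (1 - m / 2) * (1 - m * sin θ ^ 2) ^ (-(1 / 2) : ℝ)
      ≤ (1 - m / 2) ^ (-(1 / 2) : ℝ) * ((1 - m * sin θ ^ 2) - (1 - m / 2)) := by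
    have hD := one_sub_mul_sin_sq_pos hm θ
    rw [← one_sub_mul_sin_sq_rpow_mul_self (1 / 2) hm θ,
      show (1 / 2 - 1 : ℝ) = -(1 / 2) by norm_num]
    rcases le_total (1 - m / 2) (1 - m * sin θ ^ 2) with h | h
    · nlinarith [rpow_le_rpow_of_nonpos hc h (by norm_num : (-(1 / 2) : ℝ) ≤ 0)]
    · nlinarith [rpow_le_rpow_of_nonpos hD h (by norm_num : (-(1 / 2) : ℝ) ≤ 0)]
  have hmean := integral_mono (by positivity : (0 : ℝ) ≤ π / 2)
    ((hint _).sub ((hint _).const_mul _))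
    (((Continuous.intervalIntegrable (by fun_prop) _ _).sub intervalIntegrable_const).const_mul _)
    hpointwise
  rw [integral_sub (hint _) ((hint _).const_mul _), integral_const_mul, integral_const_mul,
    integral_sub (Continuous.intervalIntegrable (by fun_prop) _ _) intervalIntegrable_const,
    integral_one_sub_mul_sin_sq, integral_const, smul_eq_mul, sub_zero, sub_self, mul_zero] at hmean
  exact sub_nonpos.1 hmean

theorem ellipticE_le_ellipticK (hm0 : 0 ≤ m) (hm : m < 1) : ellipticE m ≤ ellipticK m := by
  nlinarith [ellipticE_le_mul_ellipticK hm, ellipticK_pos hm]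

theorem hasDerivAt_ellipticK_one_sub (hm0 : 0 < m) (hm1 : m ≠ 1) :
    HasDerivAt (fun x ↦ ellipticK (1 - x))
      (-((ellipticE (1 - m) - m * ellipticK (1 - m)) / (2 * m * (1 - m)))) m := by
  refine ((hasDerivAt_ellipticK (m := 1 - m) (by linarith)
    (sub_ne_zero.2 hm1.symm)).comp_const_sub 1 m).congr_deriv ?_
  rw [sub_sub_cancel]
  ring_nf

theorem hasDerivAt_ellipticE_one_sub (hm0 : 0 < m) (hm1 : m ≠ 1) :
    HasDerivAt (fun x ↦ ellipticE (1 - x))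
      (-((ellipticE (1 - m) - ellipticK (1 - m)) / (2 * (1 - m)))) m :=
  (hasDerivAt_ellipticE (m := 1 - m) (by linarith)
    (sub_ne_zero.2 hm1.symm)).comp_const_sub 1 m

theorem tendsto_ellipticK_sub_ellipticE_mul_ellipticK_one_sub :
    Tendsto (fun m ↦ (ellipticK m - ellipticE m) * ellipticK (1 - m)) (𝓝[>] 0) (𝓝 0) := by
  have hlim : Tendsto (fun m ↦ π / 2 * √m * ellipticK m) (𝓝[>] 0) (𝓝 0) := by
    have hcont : ContinuousAt (fun m ↦ π / 2 * √m * ellipticK m) 0 :=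
      .mul (by fun_prop) (continuousAt_ellipticIntegral _ one_pos)
    simpa using hcont.tendsto.mono_left nhdsWithin_le_nhds
  refine squeeze_zero' ?_ ?_ hlim
  all_goals filter_upwards [Ioo_mem_nhdsGT one_pos] with m ⟨hm0, hm1⟩
  · exact mul_nonneg (sub_nonneg.2 (ellipticE_le_ellipticK hm0.le hm1))
      (ellipticK_pos (by linarith)).le
  · have hdiff : ellipticK m - ellipticE m ≤ m * ellipticK m := by
      linarith [one_sub_mul_ellipticK_le_ellipticE hm0.le hm1]
    have hcompl : ellipticK (1 - m) ≤ π / 2 / √m := by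
      simpa using ellipticK_le (m := 1 - m) (by linarith) (by linarith)
    have hK := ellipticK_pos hm1
    calc (ellipticK m - ellipticE m) * ellipticK (1 - m)
        ≤ m * ellipticK m * (π / 2 / √m) :=
          mul_le_mul hdiff hcompl (ellipticK_pos (by linarith)).le (by positivity)
      _ = π / 2 * (m / √m) * ellipticK m := by ring
      _ = π / 2 * √m * ellipticK m := by rw [div_sqrt]

theorem legendre_relation (hm : m ∈ Ioo 0 1) :
    ellipticK m * ellipticE (1 - m) + ellipticE m * ellipticK (1 - m)
      - ellipticK m * ellipticK (1 - m) = π / 2 := by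
  set L : ℝ → ℝ := fun x ↦ ellipticK x * ellipticE (1 - x)
    - (ellipticK x - ellipticE x) * ellipticK (1 - x) with hL
  have hderiv : ∀ x ∈ Ioo (0 : ℝ) 1, HasDerivAt L 0 x := by
    intro x ⟨hx0, hx1⟩
    have hK := hasDerivAt_ellipticK hx1 hx0.ne'
    refine ((hK.mul (hasDerivAt_ellipticE_one_sub hx0 hx1.ne)).sub
      ((hK.sub (hasDerivAt_ellipticE hx1 hx0.ne')).mul
        (hasDerivAt_ellipticK_one_sub hx0 hx1.ne))).congr_deriv ?_
    have h1x : 1 - x ≠ 0 := (sub_pos.2 hx1).ne'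
    simp only [Pi.sub_apply]
    field_simp
    ring
  have hconst : ∀ᶠ x in 𝓝[>] 0, L x = L m := by
    filter_upwards [Ioo_mem_nhdsGT one_pos] with x hx
    exact isOpen_Ioo.is_const_of_deriv_eq_zero isPreconnected_Ioo
      (fun y hy ↦ (hderiv y hy).differentiableAt.differentiableWithinAt)
      (fun y hy ↦ (hderiv y hy).deriv) hx hm
  have hlim : Tendsto L (𝓝[>] 0) (𝓝 (π / 2)) := by
    have hcont : ContinuousAt (fun x ↦ ellipticK x * ellipticE (1 - x)) 0 :=
      .mul (continuousAt_ellipticIntegral _ one_pos)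
        (continuous_ellipticE.comp (by fun_prop)).continuousAt
    have h0 := (hcont.tendsto.mono_left nhdsWithin_le_nhds).sub
      tendsto_ellipticK_sub_ellipticE_mul_ellipticK_one_sub
    simpa [ellipticK_zero, ellipticE_one] using h0
  have hLm : L m = π / 2 := tendsto_nhds_unique (tendsto_const_nhds.congr' <|
    hconst.mono fun _ ↦ Eq.symm) hlim
  rw [← hLm, hL]
  ring

/-- The ratio `𝒦(r) / 𝒦(r')` as a function of the parameter `m = r²`; the Grötzsch modulus is
`μ(r) = π / (2 · periodRatio r²)`. -/
noncomputable def periodRatio (m : ℝ) : ℝ :=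
  ellipticK m / ellipticK (1 - m)

theorem hasDerivAt_periodRatio (hm : m ∈ Ioo 0 1) :
    HasDerivAt periodRatio (π / (4 * m * (1 - m) * ellipticK (1 - m) ^ 2)) m := by
  have hm0 : m ≠ 0 := hm.1.ne'
  have h1m : 1 - m ≠ 0 := (sub_pos.2 hm.2).ne'
  have hK1 : ellipticK (1 - m) ≠ 0 := (ellipticK_pos (by linarith [hm.1])).ne'
  refine ((hasDerivAt_ellipticK hm.2 hm0).div
    (hasDerivAt_ellipticK_one_sub hm.1 hm.2.ne) hK1).congr_deriv ?_
  have hleg := legendre_relation hm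
  field_simp
  linear_combination 4 * hleg

theorem periodRatio_pos (hm : m ∈ Ioo 0 1) : 0 < periodRatio m :=
  div_pos (ellipticK_pos hm.2) (ellipticK_pos (by linarith [hm.1]))

theorem periodRatio_one_sub : periodRatio (1 - m) = (periodRatio m)⁻¹ := by
  rw [periodRatio, periodRatio, sub_sub_cancel, inv_div]

theorem periodRatio_one_half : periodRatio (1 / 2) = 1 := by
  rw [periodRatio, show (1 - 1 / 2 : ℝ) = 1 / 2 by norm_num,
    div_self (ellipticK_pos (by norm_num)).ne']

theorem continuousOn_periodRatio : ContinuousOn periodRatio (Ioo 0 1) :=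
  fun _ hm ↦ (hasDerivAt_periodRatio hm).continuousAt.continuousWithinAt

theorem strictMonoOn_periodRatio : StrictMonoOn periodRatio (Ioo 0 1) := by
  refine strictMonoOn_of_deriv_pos (convex_Ioo 0 1) continuousOn_periodRatio fun m hm ↦ ?_
  rw [interior_Ioo] at hm
  rw [(hasDerivAt_periodRatio hm).deriv]
  have hm0 : 0 < m := hm.1
  have h1m : 0 < 1 - m := sub_pos.2 hm.2
  have hK1 : 0 < ellipticK (1 - m) := ellipticK_pos (by linarith)
  positivity

theorem monotoneOn_periodRatio_add_log :
    MonotoneOn (fun m ↦ periodRatio m + log (1 - m) / π) (Ioo 0 1) := by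
  have hderiv : ∀ m ∈ Ioo (0 : ℝ) 1, HasDerivAt (fun m ↦ periodRatio m + log (1 - m) / π)
      (π / (4 * m * (1 - m) * ellipticK (1 - m) ^ 2) + -1 / (1 - m) / π) m := fun m hm ↦
    (hasDerivAt_periodRatio hm).add
      ((((hasDerivAt_id m).const_sub 1).log (sub_pos.2 hm.2).ne').div_const π)
  refine monotoneOn_of_deriv_nonneg (convex_Ioo 0 1)
    (fun m hm ↦ (hderiv m hm).continuousAt.continuousWithinAt) ?_ ?_ <;> rw [interior_Ioo]
  · exact fun m hm ↦ (hderiv m hm).differentiableAt.differentiableWithinAt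
  · intro m hm
    have h1m : 0 < 1 - m := sub_pos.2 hm.2
    have hm0 : 0 < m := hm.1
    have hK1 : 0 < ellipticK (1 - m) := ellipticK_pos (by linarith)
    have hbound : 4 * m * ellipticK (1 - m) ^ 2 ≤ π ^ 2 := by
      have hle := ellipticK_le (m := 1 - m) h1m.le (by linarith)
      rw [sub_sub_cancel, le_div_iff₀ (sqrt_pos.2 hm0)] at hle
      nlinarith [pow_le_pow_left₀ (by positivity) hle 2, mul_pow (ellipticK (1 - m)) √m 2,
        sq_sqrt hm0.le]
    rw [(hderiv m hm).deriv, neg_div, neg_div, ← sub_eq_add_neg, sub_nonneg, div_div,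
      div_le_div_iff₀ (by positivity) (by positivity)]
    nlinarith

theorem tendsto_periodRatio_nhdsLT_one : Tendsto periodRatio (𝓝[<] 1) atTop := by
  have hsub : Tendsto (fun m : ℝ ↦ 1 - m) (𝓝[<] 1) (𝓝[>] 0) := by
    simpa using ((continuous_sub_left (1 : ℝ)).continuousWithinAt (x := 1)).tendsto_nhdsWithin
      (s := Iio 1) (t := Ioi 0) fun _ ↦ sub_pos.2
  have hlog : Tendsto (fun m ↦ -log (1 - m) / π) (𝓝[<] 1) atTop :=
    (tendsto_neg_atBot_atTop.comp (tendsto_log_nhdsGT_zero.comp hsub)).atTop_div_const pi_pos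
  refine tendsto_atTop_mono' _ ?_
    (tendsto_atTop_add_const_left _ (periodRatio (1 / 2) + log (1 - 1 / 2) / π) hlog)
  filter_upwards [Ioo_mem_nhdsLT (by norm_num : (1 / 2 : ℝ) < 1)] with m hm
  have := monotoneOn_periodRatio_add_log ⟨by norm_num, by norm_num⟩
    ⟨by linarith [hm.1], hm.2⟩ hm.1.le
  simp only [neg_div] at this ⊢
  linarith

theorem tendsto_periodRatio_nhdsGT_zero : Tendsto periodRatio (𝓝[>] 0) (𝓝 0) := by
  have hsub : Tendsto (fun m : ℝ ↦ 1 - m) (𝓝[>] 0) (𝓝[<] 1) := by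
    simpa using ((continuous_sub_left (1 : ℝ)).continuousWithinAt (x := 0)).tendsto_nhdsWithin
      (s := Ioi 0) (t := Iio 1) fun _ ↦ sub_lt_self 1
  refine (tendsto_periodRatio_nhdsLT_one.comp hsub).inv_tendsto_atTop.congr fun m ↦ ?_
  simp [periodRatio_one_sub]

theorem bijOn_periodRatio : BijOn periodRatio (Ioo 0 1) (Ioi 0) := by
  refine ⟨fun m hm ↦ periodRatio_pos hm, strictMonoOn_periodRatio.injOn, ?_⟩
  have h0 : 𝓝[>] (0 : ℝ) ≤ 𝓟 (Ioo 0 1) := le_principal_iff.2 (Ioo_mem_nhdsGT one_pos)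
  have h1 : 𝓝[<] (1 : ℝ) ≤ 𝓟 (Ioo 0 1) := le_principal_iff.2 (Ioo_mem_nhdsLT one_pos)
  exact isPreconnected_Ioo.intermediate_value_Ioi h0 h1 continuousOn_periodRatio
    tendsto_periodRatio_nhdsGT_zero tendsto_periodRatio_nhdsLT_one

theorem ellK_eq_ellipticK (r : ℝ) : ellK r = ellipticK (r ^ 2) := rfl

theorem mu_eq_pi_div_two_mul_periodRatio {r : ℝ} (hr : r ^ 2 ≤ 1) :
    mu r = π / (2 * periodRatio (r ^ 2)) := by
  rw [mu, ellK_eq_ellipticK, ellK_eq_ellipticK, sq_sqrt (sub_nonneg.2 hr), periodRatio]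
  field_simp

/-- The inverse of `periodRatio`: the parameter `m = r²` with `μ(r) = π / (2t)`. -/
noncomputable def ellipticParameter (t : ℝ) : ℝ :=
  Function.invFunOn periodRatio (Ioo 0 1) t

variable {t : ℝ}

theorem ellipticParameter_mem_Ioo (ht : 0 < t) : ellipticParameter t ∈ Ioo 0 1 :=
  bijOn_periodRatio.surjOn.mapsTo_invFunOn ht

theorem periodRatio_ellipticParameter (ht : 0 < t) : periodRatio (ellipticParameter t) = t :=
  bijOn_periodRatio.invOn_invFunOn.2 ht

theorem ellipticParameter_periodRatio (hm : m ∈ Ioo 0 1) :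
    ellipticParameter (periodRatio m) = m :=
  bijOn_periodRatio.invOn_invFunOn.1 hm

theorem sqrt_mem_Ioo (hm : m ∈ Ioo 0 1) : √m ∈ Ioo 0 1 :=
  ⟨sqrt_pos.2 hm.1, (sqrt_lt_sqrt hm.1.le hm.2).trans_eq sqrt_one⟩

theorem mu_sqrt_ellipticParameter (ht : 0 < t) :
    mu √(ellipticParameter t) = π / (2 * t) := by
  have hm := ellipticParameter_mem_Ioo ht
  have hsq : √(ellipticParameter t) ^ 2 = ellipticParameter t := sq_sqrt hm.1.le
  rw [mu_eq_pi_div_two_mul_periodRatio (hsq.trans_le hm.2.le), hsq,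
    periodRatio_ellipticParameter ht]

theorem ellipticParameter_one : ellipticParameter 1 = 1 / 2 := by
  simpa only [periodRatio_one_half] using ellipticParameter_periodRatio (m := 1 / 2) (by norm_num)

theorem one_half_le_ellipticParameter (ht : 1 ≤ t) : 1 / 2 ≤ ellipticParameter t := by
  have ht0 : 0 < t := one_pos.trans_le ht
  rwa [← strictMonoOn_periodRatio.le_iff_le (by norm_num) (ellipticParameter_mem_Ioo ht0),
    periodRatio_one_half, periodRatio_ellipticParameter ht0]

/-- The logarithmic derivative `λ' / λ` of the linear distortion function, as a function of the
parameter `m`. -/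
noncomputable def distortionLogDeriv (m : ℝ) : ℝ :=
  4 / π * ellipticK (1 - m) ^ 2

/-- The ratio `λ'' / λ'` for the linear distortion function, as a function of the parameter `m`. -/
noncomputable def distortionDerivLogDeriv (m : ℝ) : ℝ :=
  (1 + m) * distortionLogDeriv m - 4 / π * (ellipticK (1 - m) * ellipticE (1 - m))

theorem hasDerivAt_ellipticParameter (ht : 0 < t) :
    HasDerivAt ellipticParameter (ellipticParameter t * (1 - ellipticParameter t) *
      distortionLogDeriv (ellipticParameter t)) t := by
  set m := ellipticParameter t
  have hm : m ∈ Ioo 0 1 := ellipticParameter_mem_Ioo ht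
  have hm0 : 0 < m := hm.1
  have h1m : 0 < 1 - m := sub_pos.2 hm.2
  have hK1 : 0 < ellipticK (1 - m) := ellipticK_pos (by linarith)
  have hnhds : Ioo (0 : ℝ) 1 ∈ 𝓝 m := isOpen_Ioo.mem_nhds hm
  have hcont : ContinuousAt (fun x ↦ π / (4 * x * (1 - x) * ellipticK (1 - x) ^ 2)) m := by
    refine .div continuousAt_const (.mul (by fun_prop) (.pow ?_ 2)) (by positivity)
    exact (hasDerivAt_ellipticK_one_sub hm0 hm.2.ne).continuousAt
  have hstrict := hasStrictDerivAt_of_hasDerivAt_of_continuousAt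
    (eventually_of_mem hnhds fun x hx ↦ hasDerivAt_periodRatio hx) hcont
  have hinv := (hstrict.to_local_left_inverse (by positivity)
    (eventually_of_mem hnhds fun x hx ↦ ellipticParameter_periodRatio hx)).hasDerivAt
  rw [periodRatio_ellipticParameter ht] at hinv
  refine hinv.congr_deriv ?_
  rw [distortionLogDeriv]
  field_simp

theorem pi_le_distortionLogDeriv (hm : m ∈ Ioo 0 1) : π ≤ distortionLogDeriv m := by
  have hK1 := pi_div_two_le_ellipticK (m := 1 - m) (sub_pos.2 hm.2).le (by linarith [hm.1])
  calc π = 4 / π * (π / 2) ^ 2 := by field_simp; norm_num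
    _ ≤ distortionLogDeriv m := by rw [distortionLogDeriv]; gcongr

theorem mul_distortionLogDeriv_le_distortionDerivLogDeriv (hm0 : 0 < m) :
    (1 + m) / 2 * distortionLogDeriv m ≤ distortionDerivLogDeriv m := by
  have hE := ellipticE_le_mul_ellipticK (m := 1 - m) (by linarith)
  have hK := ellipticK_pos (m := 1 - m) (by linarith)
  have hKE := mul_le_mul_of_nonneg_left hE (by positivity : 0 ≤ 4 / π * ellipticK (1 - m))
  rw [distortionDerivLogDeriv, distortionLogDeriv]
  linarith

theorem distortionDerivLogDeriv_one_half :
    distortionDerivLogDeriv (1 / 2) = distortionLogDeriv (1 / 2) - 1 := by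
  have hleg := legendre_relation (m := 1 / 2) (by norm_num)
  rw [distortionDerivLogDeriv, distortionLogDeriv]
  rw [show (1 - 1 / 2 : ℝ) = 1 / 2 by norm_num] at hleg ⊢
  field_simp
  linear_combination (-4) * hleg

theorem hasDerivAt_distortionLogDeriv (hm : m ∈ Ioo 0 1) :
    HasDerivAt distortionLogDeriv
      ((distortionDerivLogDeriv m - distortionLogDeriv m) / (m * (1 - m))) m := by
  have hm0 : m ≠ 0 := hm.1.ne'
  have h1m : 1 - m ≠ 0 := (sub_pos.2 hm.2).ne'
  refine (((hasDerivAt_ellipticK_one_sub hm.1 hm.2.ne).fun_pow 2).const_mul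
    (4 / π)).congr_deriv ?_
  rw [distortionDerivLogDeriv, distortionLogDeriv]
  field_simp
  ring

theorem hasDerivAt_distortionDerivLogDeriv (hm : m ∈ Ioo 0 1) :
    HasDerivAt distortionDerivLogDeriv
      ((distortionDerivLogDeriv m ^ 2 - (1 - m + m ^ 2) * distortionLogDeriv m ^ 2) /
        (2 * (m * (1 - m) * distortionLogDeriv m))) m := by
  have hm0 : m ≠ 0 := hm.1.ne'
  have h1m : 1 - m ≠ 0 := (sub_pos.2 hm.2).ne'
  have hK1 : ellipticK (1 - m) ≠ 0 := (ellipticK_pos (by linarith [hm.1])).ne'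
  refine ((((hasDerivAt_id m).const_add 1).mul (hasDerivAt_distortionLogDeriv hm)).sub
    (((hasDerivAt_ellipticK_one_sub hm.1 hm.2.ne).mul
      (hasDerivAt_ellipticE_one_sub hm.1 hm.2.ne)).const_mul (4 / π))).congr_deriv ?_
  simp only [id]
  rw [distortionDerivLogDeriv, distortionLogDeriv]
  field_simp
  ring

theorem hasDerivAt_distortionLogDeriv_ellipticParameter (ht : 0 < t) :
    HasDerivAt (fun t ↦ distortionLogDeriv (ellipticParameter t))
      (distortionLogDeriv (ellipticParameter t) *
        (distortionDerivLogDeriv (ellipticParameter t) -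
          distortionLogDeriv (ellipticParameter t))) t := by
  have hm := ellipticParameter_mem_Ioo ht
  refine ((hasDerivAt_distortionLogDeriv hm).comp t
    (hasDerivAt_ellipticParameter ht)).congr_deriv ?_
  have hm0 := hm.1.ne'
  have h1m := (sub_pos.2 hm.2).ne'
  field_simp

theorem hasDerivAt_distortionDerivLogDeriv_ellipticParameter (ht : 0 < t) :
    HasDerivAt (fun t ↦ distortionDerivLogDeriv (ellipticParameter t))
      ((distortionDerivLogDeriv (ellipticParameter t) ^ 2 -
        (1 - ellipticParameter t + ellipticParameter t ^ 2) *
          distortionLogDeriv (ellipticParameter t) ^ 2) / 2) t := by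
  have hm := ellipticParameter_mem_Ioo ht
  refine ((hasDerivAt_distortionDerivLogDeriv hm).comp t
    (hasDerivAt_ellipticParameter ht)).congr_deriv ?_
  have hm0 := hm.1.ne'
  have h1m := (sub_pos.2 hm.2).ne'
  have hP := (pi_pos.trans_le (pi_le_distortionLogDeriv hm)).ne'
  field_simp

/-- The linear distortion function `λ(t) = r² / (1 - r²)`, where `μ(r) = π / (2t)`. -/
noncomputable def linearDistortion (t : ℝ) : ℝ :=
  ellipticParameter t / (1 - ellipticParameter t)

/-- The first three derivatives of `linearDistortion`, in closed form; the values at orders above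
three are placeholders. -/
noncomputable def linearDistortionDeriv (k : ℕ) (t : ℝ) : ℝ :=
  let m := ellipticParameter t
  let P := distortionLogDeriv m
  let S := distortionDerivLogDeriv m
  match k with
  | 0 => linearDistortion t
  | 1 => linearDistortion t * P
  | 2 => linearDistortion t * P * S
  | 3 => linearDistortion t * P * (3 * S ^ 2 - (1 - m + m ^ 2) * P ^ 2) / 2
  | _ => 0

theorem linearDistortion_pos (ht : 0 < t) : 0 < linearDistortion t :=
  div_pos (ellipticParameter_mem_Ioo ht).1 (sub_pos.2 (ellipticParameter_mem_Ioo ht).2)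

theorem linearDistortion_one : linearDistortion 1 = 1 := by
  rw [linearDistortion, ellipticParameter_one]
  norm_num

theorem hasDerivAt_linearDistortion (ht : 0 < t) :
    HasDerivAt linearDistortion
      (linearDistortion t * distortionLogDeriv (ellipticParameter t)) t := by
  have h1m : 1 - ellipticParameter t ≠ 0 := (sub_pos.2 (ellipticParameter_mem_Ioo ht).2).ne'
  have hm := hasDerivAt_ellipticParameter ht
  refine (hm.div (hm.const_sub 1) h1m).congr_deriv ?_
  rw [linearDistortion]
  field_simp
  ring

theorem hasDerivAt_linearDistortionDeriv (ht : 0 < t) :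
    ∀ k < 3, HasDerivAt (linearDistortionDeriv k) (linearDistortionDeriv (k + 1) t) t := by
  have hlam := hasDerivAt_linearDistortion ht
  have hP := hasDerivAt_distortionLogDeriv_ellipticParameter ht
  have hS := hasDerivAt_distortionDerivLogDeriv_ellipticParameter ht
  intro k hk
  interval_cases k
  · exact hlam
  · refine (hlam.mul hP).congr_deriv ?_
    simp only [linearDistortionDeriv]
    ring
  · refine ((hlam.mul hP).mul hS).congr_deriv ?_
    simp only [linearDistortionDeriv, Pi.mul_apply]
    ring

theorem hasDerivAt_linearDistortionDeriv_three (ht : 0 < t) :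
    HasDerivAt (linearDistortionDeriv 3)
      (linearDistortion t * distortionLogDeriv (ellipticParameter t) *
        (3 * distortionDerivLogDeriv (ellipticParameter t) ^ 3 -
          3 * (1 - ellipticParameter t + ellipticParameter t ^ 2) *
            distortionDerivLogDeriv (ellipticParameter t) *
            distortionLogDeriv (ellipticParameter t) ^ 2 +
          (1 + ellipticParameter t) * (2 - 3 * ellipticParameter t + 2 * ellipticParameter t ^ 2) /
            2 * distortionLogDeriv (ellipticParameter t) ^ 3)) t := by
  have hlam := hasDerivAt_linearDistortion ht
  have hm := hasDerivAt_ellipticParameter ht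
  have hP := hasDerivAt_distortionLogDeriv_ellipticParameter ht
  have hS := hasDerivAt_distortionDerivLogDeriv_ellipticParameter ht
  refine (((hlam.mul hP).mul (((hS.fun_pow 2).const_mul 3).sub
    (((hm.const_sub 1).add (hm.fun_pow 2)).mul (hP.fun_pow 2)))).div_const 2).congr_deriv ?_
  simp only [Pi.mul_apply, Pi.add_apply, Pi.sub_apply]
  ring

theorem distortion_cubic_pos {P S : ℝ} (hm : m ∈ Ico (1 / 2) 1) (hP : 0 < P)
    (hS : (1 + m) / 2 * P ≤ S) :
    0 < 3 * S ^ 3 - 3 * (1 - m + m ^ 2) * S * P ^ 2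
      + (1 + m) * (2 - 3 * m + 2 * m ^ 2) / 2 * P ^ 3 := by
  obtain ⟨d, hd, rfl⟩ : ∃ d, 0 ≤ d ∧ S = (1 + m) / 2 * P + d :=
    ⟨S - (1 + m) / 2 * P, sub_nonneg.2 hS, by ring⟩
  have hm0 : 0 < m := by linarith [hm.1]
  have hconst : 0 < -1 + 6 * m - m ^ 2 := by nlinarith [hm.1, hm.2]
  have hlin : 0 < -3 + 30 * m - 3 * m ^ 2 := by linarith
  calc 0 < (1 + m) * (-1 + 6 * m - m ^ 2) / 8 * P ^ 3 + (-3 + 30 * m - 3 * m ^ 2) / 4 * P ^ 2 * d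
        + 9 * (1 + m) / 2 * P * d ^ 2 + 3 * d ^ 3 := by positivity
    _ = _ := by ring

theorem strictMonoOn_linearDistortionDeriv_three :
    StrictMonoOn (linearDistortionDeriv 3) (Ici 1) := by
  have hpos {t : ℝ} (ht : t ∈ Ici 1) : 0 < t := one_pos.trans_le ht
  refine strictMonoOn_of_deriv_pos (convex_Ici 1) (fun t ht ↦
    (hasDerivAt_linearDistortionDeriv_three (hpos ht)).continuousAt.continuousWithinAt)
    fun t ht ↦ ?_
  have ht1 : 1 ≤ t := interior_subset ht
  have ht0 : 0 < t := hpos ht1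
  have hm := ellipticParameter_mem_Ioo ht0
  have hP := pi_pos.trans_le (pi_le_distortionLogDeriv hm)
  rw [(hasDerivAt_linearDistortionDeriv_three ht0).deriv]
  exact mul_pos (mul_pos (linearDistortion_pos ht0) hP) <|
    distortion_cubic_pos ⟨one_half_le_ellipticParameter ht1, hm.2⟩ hP
      (mul_distortionLogDeriv_le_distortionDerivLogDeriv hm.1)

theorem exp_sub_one_le_linearDistortion (ht : 1 ≤ t) : exp (t - 1) ≤ linearDistortion t := by
  have hderiv {x : ℝ} (hx : 0 < x) : HasDerivAt (fun x ↦ log (linearDistortion x))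
      (distortionLogDeriv (ellipticParameter x)) x := by
    refine ((hasDerivAt_linearDistortion hx).log (linearDistortion_pos hx).ne').congr_deriv ?_
    rw [mul_div_cancel_left₀ _ (linearDistortion_pos hx).ne']
  have hmvt := (convex_Ioi 0).mul_sub_le_image_sub_of_le_deriv (C := 1)
    (fun x hx ↦ (hderiv hx).continuousAt.continuousWithinAt)
    (fun x hx ↦ (hderiv (interior_subset hx)).differentiableAt.differentiableWithinAt)
    (fun x hx ↦ ?_) 1 (mem_Ioi.2 one_pos) t (one_pos.trans_le ht) ht
  · rw [linearDistortion_one, log_one, one_mul, sub_zero] at hmvt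
    exact (le_log_iff_exp_le (linearDistortion_pos (one_pos.trans_le ht))).1 hmvt
  · have hx0 : 0 < x := interior_subset hx
    rw [(hderiv hx0).deriv]
    linarith [pi_le_distortionLogDeriv (ellipticParameter_mem_Ioo hx0), pi_gt_three]

theorem tendsto_linearDistortion_div_pow_atTop (n : ℕ) :
    Tendsto (fun t ↦ linearDistortion t / (t - 1) ^ n) atTop atTop := by
  refine tendsto_atTop_mono' _ ?_ ((tendsto_exp_div_pow_atTop n).comp
    (tendsto_atTop_add_const_right _ (-1) tendsto_id))
  filter_upwards [eventually_gt_atTop 1] with t ht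
  exact div_le_div_of_nonneg_right (exp_sub_one_le_linearDistortion ht.le)
    (pow_nonneg (sub_nonneg.2 ht.le) n)

theorem taylorQuotient_linearDistortionDeriv_apply (t : ℝ) :
    taylorQuotient linearDistortionDeriv 1 3 t =
      (linearDistortion t - 1 - distortionLogDeriv (1 / 2) * (t - 1)
        - 1 / 2 * distortionLogDeriv (1 / 2) * (distortionLogDeriv (1 / 2) - 1) * (t - 1) ^ 2)
        / (t - 1) ^ 3 := by
  simp only [taylorQuotient, taylorRemainder, Finset.sum_range_succ, Finset.sum_range_zero,
    linearDistortionDeriv, linearDistortion_one, ellipticParameter_one,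
    distortionDerivLogDeriv_one_half, Nat.factorial]
  congr 1
  push_cast
  ring

theorem linearDistortionDeriv_three_one_div_factorial :
    linearDistortionDeriv 3 1 / Nat.factorial 3 =
      distortionLogDeriv (1 / 2)
        * (4 * (distortionLogDeriv (1 / 2) - 1) ^ 2 - distortionLogDeriv (1 / 2) ^ 2) / 16 := by
  simp only [linearDistortionDeriv, linearDistortion_one, ellipticParameter_one,
    distortionDerivLogDeriv_one_half, Nat.factorial]
  push_cast
  ring

theorem strictMonoOn_taylorQuotient_linearDistortionDeriv :
    StrictMonoOn (taylorQuotient linearDistortionDeriv 1 3) (Ioi 1) :=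
  strictMonoOn_taylorQuotient
    (fun k hk _ ht ↦ hasDerivAt_linearDistortionDeriv (one_pos.trans_le ht) k hk)
    (strictMonoOn_linearDistortionDeriv_three.mono Ioi_subset_Ici_self)

theorem tendsto_taylorQuotient_linearDistortionDeriv_nhdsGT_one :
    Tendsto (taylorQuotient linearDistortionDeriv 1 3) (𝓝[>] 1)
      (𝓝 (linearDistortionDeriv 3 1 / Nat.factorial 3)) :=
  tendsto_taylorQuotient_nhdsGT
    (fun k hk _ ht ↦ hasDerivAt_linearDistortionDeriv (one_pos.trans_le ht) k hk)
    (hasDerivAt_linearDistortionDeriv_three one_pos).continuousAt.continuousWithinAt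

theorem continuousOn_linearDistortion : ContinuousOn linearDistortion (Ioi 0) :=
  fun _ ht ↦ (hasDerivAt_linearDistortion ht).continuousAt.continuousWithinAt

end EllipticIntegral

theorem stmt_7 (lam : ℝ → ℝ)
    (hlam : ∀ K : ℝ, 0 < K → ∀ r ∈ Set.Ioo (0:ℝ) 1,
      mu r = Real.pi / (2 * K) → lam K = r ^ 2 / (1 - r ^ 2)) (a c : ℝ)
    (ha : a = 4 / Real.pi * ellK (1 / Real.sqrt 2) ^ 2)
    (hc : c = a * (4 * (a - 1) ^ 2 - a ^ 2) / 16) (f : ℝ → ℝ)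
    (hf : f = fun K : ℝ =>
      (lam K - 1 - a * (K - 1) - 1 / 2 * a * (a - 1) * (K - 1) ^ 2) / (K - 1) ^ 3) :
    StrictMonoOn f (Set.Ioi 1) ∧
    Filter.Tendsto f (nhdsWithin 1 (Set.Ioi 1)) (nhds c) ∧
    Filter.Tendsto f Filter.atTop Filter.atTop ∧
    f '' Set.Ioi 1 = Set.Ioi c := by
  have ha' : a = distortionLogDeriv (1 / 2) := by
    rw [ha, distortionLogDeriv, ellK_eq_ellipticK]
    norm_num
  have hlam' {t : ℝ} (ht : 0 < t) : lam t = linearDistortion t := by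
    have hm := ellipticParameter_mem_Ioo ht
    rw [hlam t ht _ (sqrt_mem_Ioo hm) (mu_sqrt_ellipticParameter ht), Real.sq_sqrt hm.1.le,
      linearDistortion]
  have hfq : EqOn (taylorQuotient linearDistortionDeriv 1 3) f (Ioi 1) := fun t ht ↦ by
    rw [hf, taylorQuotient_linearDistortionDeriv_apply, ha', ← hlam' (one_pos.trans ht)]
  have hmono := strictMonoOn_taylorQuotient_linearDistortionDeriv.congr hfq
  have hleft : Tendsto f (nhdsWithin 1 (Ioi 1)) (nhds c) := by
    rw [hc, ha', ← linearDistortionDeriv_three_one_div_factorial]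
    exact tendsto_taylorQuotient_linearDistortionDeriv_nhdsGT_one.congr'
      hfq.eventuallyEq_nhdsWithin
  have htop : Tendsto f atTop atTop :=
    (tendsto_taylorQuotient_atTop (tendsto_linearDistortion_div_pow_atTop 3)).congr'
      (hfq.eventuallyEq_of_mem (Ioi_mem_atTop 1))
  have hcont : ContinuousOn f (Ioi 1) := (continuousOn_taylorQuotient
    (continuousOn_linearDistortion.mono (Ioi_subset_Ioi zero_le_one))).congr hfq.symm
  exact ⟨hmono, hleft, htop, image_Ioi_eq_Ioi_of_strictMonoOn hmono hcont hleft htop⟩
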